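/- Fix c ∈ ℂ with c ≠ 0, an integer R ≥ 1 and N ≥ 1, and set M = N+R. Fix λ_1,…,λ_M pairwise distinct, μ_1,…,μ_{N−1}, λ_p, λ_s satisfying the nondegeneracy hypotheses making H_R well defined, and an index m = N. Then H_R(μ_1,…,μ_{N−1},μ_N; λ_1,…,λ_M; λ_p,λ_s) → 0 as μ_N → ∞ (the limit being along complex μ_N with |μ_N| → ∞ through values for which the expression is defined). -/

import Mathlib

open Complex Finset Matrix

namespace LL

noncomputable def Kk (c x y : ℂ) : ℂ := 2 * c / ((x - y) ^ 2 + c ^ 2)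

noncomputable def Vp {N M : ℕ} (c : ℂ) (μ : Fin N → ℂ) (lam : Fin M → ℂ) (x : ℂ) : ℂ :=
  (∏ m, (μ m - x + I * c)) / ∏ m, (lam m - x + I * c)

noncomputable def Vm {N M : ℕ} (c : ℂ) (μ : Fin N → ℂ) (lam : Fin M → ℂ) (x : ℂ) : ℂ :=
  (∏ m, (μ m - x - I * c)) / ∏ m, (lam m - x - I * c)

noncomputable def Xi {N M : ℕ} (μ : Fin N → ℂ) (lam : Fin M → ℂ) (j : Fin M) : ℂ :=
  (∏ m, (μ m - lam j)) / ∏ m ∈ Finset.univ.erase j, (lam m - lam j)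

noncomputable def Umat {N M : ℕ} (c : ℂ) (μ : Fin N → ℂ) (lam : Fin M → ℂ) (lp ls : ℂ) :
    Matrix (Fin M) (Fin M) ℂ := fun j k =>
  I / (Vp c μ lam (lam j) - Vm c μ lam (lam j)) * Xi μ lam j *
    (Kk c (lam j) (lam k) - Kk c lp (lam k) * Kk c ls (lam j))

noncomputable def U1mat {N M : ℕ} (c : ℂ) (μ : Fin N → ℂ) (lam : Fin M → ℂ) (lp : ℂ) :
    Matrix (Fin M) (Fin M) ℂ := fun j k =>
  I / (Vp c μ lam (lam j) - Vm c μ lam (lam j)) * Xi μ lam j *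
    (Kk c (lam j) (lam k) - Kk c lp (lam k))

noncomputable def U2mat {N M : ℕ} (c : ℂ) (μ : Fin N → ℂ) (lam : Fin M → ℂ) (lp : ℂ) :
    Matrix (Fin M) (Fin M) ℂ := fun j k =>
  U1mat c μ lam lp j k + I / (Vp c μ lam (lam j) - Vm c μ lam (lam j)) * Kk c lp (lam k)

noncomputable def HR {N M : ℕ} (c sc : ℂ) (R : ℕ) (μ : Fin N → ℂ) (lam : Fin M → ℂ)
    (lp ls : ℂ) : ℂ :=
  (I * sc) ^ R / (c ^ (2 * R - 1) * ((R - 1).factorial : ℂ)) * (-1 : ℂ) ^ (N * (R - 1)) *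
    (∏ j, ∏ k, (lam j - lam k + I * c)) *
    (∏ j, ∏ k, (lam j - μ k)⁻¹) *
    (∏ j, (Vp c μ lam (lam j) - Vm c μ lam (lam j))) *
    (1 + Umat c μ lam lp ls).det /
    ((Vp c μ lam lp - Vm c μ lam lp) * (Vp c μ lam ls - Vm c μ lam ls))

noncomputable def Jcal {N : ℕ} (μ lam : Fin N → ℂ) : ℂ :=
  (∑ j, lam j - ∑ j, μ j) ^ 4 -
    4 * (∑ j, lam j - ∑ j, μ j) * (∑ j, lam j ^ 3 - ∑ j, μ j ^ 3) +
    3 * (∑ j, lam j ^ 2 - ∑ j, μ j ^ 2) ^ 2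

noncomputable def Fff {N : ℕ} (c : ℂ) (μ lam : Fin N → ℂ) (lp ls : ℂ) : ℂ :=
  (-1 : ℂ) ^ N * (Jcal μ lam / (6 * c)) *
    (∏ j, ∏ k, (lam j - lam k + I * c)) *
    (∏ j, ∏ k, (lam j - μ k)⁻¹) *
    (∏ j, (Vp c μ lam (lam j) - Vm c μ lam (lam j))) *
    (1 + Umat c μ lam lp ls).det /
    ((Vp c μ lam lp - Vm c μ lam lp) * (Vp c μ lam ls - Vm c μ lam ls))

noncomputable def Tcal {N M : ℕ} (μ : Fin N → ℂ) (lam : Fin M → ℂ) : ℂ :=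
  (1 / 2 : ℂ) * ((∑ j, lam j - ∑ j, μ j) ^ 2 - (∑ j, lam j ^ 2 - ∑ j, μ j ^ 2))

noncomputable def Gff {N M : ℕ} (c sc : ℂ) (μ : Fin N → ℂ) (lam : Fin M → ℂ) (lp ls : ℂ) : ℂ :=
  -I * (Tcal μ lam / (c * sc)) *
    (∏ j, ∏ k, (lam j - lam k + I * c)) *
    (∏ j, ∏ k, (lam j - μ k)⁻¹) *
    (∏ j, (Vp c μ lam (lam j) - Vm c μ lam (lam j))) *
    (1 + Umat c μ lam lp ls).det /
    ((Vp c μ lam lp - Vm c μ lam lp) * (Vp c μ lam ls - Vm c μ lam ls))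

noncomputable def fsc (c x y : ℂ) : ℂ := (x - y + I * c) / (x - y)

noncomputable def stringRap (cb : ℝ) (M : ℕ) (δ : Fin M → ℂ) (j : Fin M) : ℂ :=
  I * ((cb : ℂ) / 2) * ((M : ℂ) - 1 - 2 * (j.val : ℂ)) + I * δ j

end LL

open LL

/-!
Write `Ũ_{jk} = i Ξ_j (K(λ_j, λ_k) - K(λ_p, λ_k) K(λ_s, λ_j)) / (Ṽ⁺_j - Ṽ⁻_j)` and
`S = diag(Ṽ⁺ - Ṽ⁻) + (i Ξ_j K(λ_j, λ_k))_{jk}`. Since `N < M`, partial fractions give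
`∑ k, Ξ_k K(y, λ_k) = i (Ṽ⁺(y) - Ṽ⁻(y))`, so `(1, …, 1)` and `Ξ` are left and right null vectors
of `S`. Now `diag(Ṽ⁺ - Ṽ⁻) (1 + Ũ)` is a rank-one perturbation of the singular matrix `S`, so its
determinant factors and the denominator of `H_R` cancels: for every index `z`,
`Ξ_z H_R = const · ∏_{j,k} (λ_j - μ_k)⁻¹ · adj(S)_{zz}`, which no longer involves `λ_p` and `λ_s`.
The entries of `S` grow at most linearly in `μ_N`, so `adj(S)_{zz} = O(μ_N ^ (M - 1))`, whereas the
product is `O(μ_N ^ (-M))` and `Ξ_z⁻¹ = O(μ_N⁻¹)`; altogether `H_R = O(μ_N ^ (-2))`.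
-/

open Filter Asymptotics Bornology Polynomial

section Determinants

variable {n R : Type*} [Fintype n] [DecidableEq n] [CommRing R]

theorem apply_mul_det_of_vecMul_eq_smul {A : Matrix n n R} {a v : n → R} {r : R}
    (h : a ᵥ* A = r • v) (z : n) : a z * A.det = r * (A.updateRow z v).det := by
  have hcramer : (v ᵥ* A.adjugate) z = (A.updateRow z v).det := by
    rw [← cramer_transpose_apply, cramer_eq_adjugate_mulVec, ← adjugate_transpose,
      mulVec_transpose]
  calc a z * A.det = (a ᵥ* A ᵥ* A.adjugate) z := by
        rw [vecMul_vecMul, mul_adjugate, vecMul_smul, vecMul_one, Pi.smul_apply, smul_eq_mul,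
          mul_comm]
    _ = r * (A.updateRow z v).det := by rw [h, smul_vecMul, Pi.smul_apply, hcramer, smul_eq_mul]

theorem apply_mul_det_of_mulVec_eq_smul {A : Matrix n n R} {x u : n → R} {r : R}
    (h : A *ᵥ x = r • u) (z : n) : x z * A.det = r * (A.updateCol z u).det := by
  rw [← det_transpose A, apply_mul_det_of_vecMul_eq_smul (by rwa [vecMul_transpose]),
    updateRow_transpose, det_transpose]

theorem det_updateRow_add_vecMulVec (S : Matrix n n R) (u v : n → R) (z : n) :
    ((S + vecMulVec u v).updateRow z v).det = (S.updateRow z v).det := by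
  refine det_eq_of_forall_row_eq_smul_add_const (Function.update u z 0) z
    (Function.update_self ..) fun i j => ?_
  rcases eq_or_ne i z with rfl | hi
  · simp
  · simp [hi, vecMulVec_apply]

theorem mul_det_add_vecMulVec_of_kernels {S : Matrix n n R} {a x : n → R}
    (ha : a ᵥ* S = 0) (hx : S *ᵥ x = 0) (u v : n → R) (z : n) :
    x z * a z * (S + vecMulVec u v).det = (a ⬝ᵥ u) * (v ⬝ᵥ x) * S.adjugate z z := by
  have hrow : a ᵥ* (S + vecMulVec u v) = (a ⬝ᵥ u) • v := by
    rw [vecMul_add, ha, zero_add, vecMul_vecMulVec]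
  have hcol : S.updateRow z v *ᵥ x = (v ⬝ᵥ x) • Pi.single z 1 := by
    ext i
    rcases eq_or_ne i z with rfl | hi
    · simp [mulVec, updateRow_self]
    · simpa [mulVec, hi] using congrFun hx i
  have hadj : ((S.updateRow z v).updateCol z (Pi.single z 1)).det = S.adjugate z z := by
    rw [← cramer_apply, cramer_eq_adjugate_mulVec, mulVec_single_one, col_apply, adjugate_apply,
      updateRow_idem, adjugate_apply]
  rw [mul_assoc, apply_mul_det_of_vecMul_eq_smul hrow, det_updateRow_add_vecMulVec, mul_left_comm,
    apply_mul_det_of_mulVec_eq_smul hcol, hadj, mul_assoc]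

theorem isBigO_det {α 𝕜 : Type*} [NormedField 𝕜] {l : Filter α} {A : α → Matrix n n 𝕜}
    {f : n → α → 𝕜} (h : ∀ i j, (fun x => A x i j) =O[l] f i) :
    (fun x => (A x).det) =O[l] fun x => ∏ i, f i x := by
  have hdet : ∀ x, (A x).det = ∑ σ : Equiv.Perm n, (Equiv.Perm.sign σ : 𝕜) * ∏ i, A x i (σ i) :=
    fun x => by simpa using det_apply' (A x)ᵀ
  simp only [hdet]
  exact IsBigO.fun_sum fun σ _ => (IsBigO.finsetProd fun i _ => h i (σ i)).const_mul_left _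

theorem isBigO_adjugate_diag {α 𝕜 : Type*} [NormedField 𝕜] {l : Filter α}
    {A : α → Matrix n n 𝕜} {f : α → 𝕜} {z : n}
    (h : ∀ i ≠ z, ∀ j, (fun x => A x i j) =O[l] f) :
    (fun x => (A x).adjugate z z) =O[l] fun x => f x ^ (Fintype.card n - 1) := by
  have hrow : ∀ i j, (fun x => (A x).updateRow z (Pi.single z 1) i j) =O[l]
      Function.update (fun _ => f) z 1 i := by
    intro i j
    rcases eq_or_ne i z with rfl | hi
    · simpa using! isBigO_const_const _ one_ne_zero _
    · simpa [hi] using h i hi j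
  simp only [adjugate_apply]
  refine (isBigO_det hrow).congr_right fun x => ?_
  have herase : ∀ i ∈ univ.erase z, Function.update (fun _ => f) z 1 i x = f x := fun i hi => by
    rw [Function.update_of_ne (ne_of_mem_erase hi)]
  rw [← mul_prod_erase univ _ (mem_univ z), prod_congr rfl herase, prod_const,
    card_erase_of_mem (mem_univ z), card_univ, Function.update_self, Pi.one_apply, one_mul]

end Determinants

theorem eval_div_prod_sub_eq_sum {F ι : Type*} [Field F] [DecidableEq ι] {s : Finset ι} {v : ι → F}
    (hv : Set.InjOn v s) {P : F[X]} (hP : P.degree < #s) {y : F} (hy : ∀ i ∈ s, y ≠ v i) :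
    P.eval y / ∏ i ∈ s, (y - v i) =
      ∑ i ∈ s, P.eval (v i) / (∏ j ∈ s.erase i, (v i - v j)) * (y - v i)⁻¹ := by
  have hnodal : ∏ i ∈ s, (y - v i) ≠ 0 := prod_ne_zero_iff.mpr fun i hi => sub_ne_zero.mpr (hy i hi)
  conv_lhs => rw [Lagrange.eq_interpolate hv hP, Lagrange.eval_interpolate_not_at_node _ hy,
    Lagrange.eval_nodal, mul_div_cancel_left₀ _ hnodal]
  refine sum_congr rfl fun i _ => ?_
  rw [Lagrange.nodalWeight, prod_inv_distrib]
  ring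

theorem isEquivalent_sub_const_cobounded {𝕜 : Type*} [NormedField 𝕜] (b : 𝕜) :
    (fun x => x - b) ~[cobounded 𝕜] fun x => x :=
  (isLittleO_const_id_cobounded (E'' := 𝕜) b).neg_left.congr_left fun x => by simp

namespace LL

variable {N M : ℕ}

theorem Xi_ne_zero {μ : Fin N → ℂ} {lam : Fin M → ℂ} (hinj : Function.Injective lam) {j : Fin M}
    (h : ∀ k, μ k ≠ lam j) : Xi μ lam j ≠ 0 :=
  div_ne_zero (prod_ne_zero_iff.mpr fun k _ => sub_ne_zero.mpr (h k))
    (prod_ne_zero_iff.mpr fun _ hm => sub_ne_zero.mpr (hinj.ne (ne_of_mem_erase hm)))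

theorem Kk_comm (c x y : ℂ) : Kk c x y = Kk c y x := by
  rw [Kk, Kk, ← neg_sub y x, neg_sq]

theorem sum_Xi_mul_inv_sub (hNM : N < M) (μ : Fin N → ℂ) {lam : Fin M → ℂ}
    (hinj : Function.Injective lam) {y : ℂ} (hy : ∀ k, lam k ≠ y) :
    ∑ k, Xi μ lam k * (lam k - y)⁻¹ = (∏ m, (μ m - y)) / ∏ m, (lam m - y) := by
  have hdeg : (∏ m, (X + C (μ m)) : ℂ[X]).degree < (#(univ : Finset (Fin M)) : WithBot ℕ) := by
    simpa [degree_prod, degree_X_add_C] using hNM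
  -- With nodes `-λ_k` and the point `-y`, every factor has the sign it has in `Xi`.
  have h := eval_div_prod_sub_eq_sum (v := fun k => -lam k) (y := -y)
    (neg_injective.comp hinj).injOn hdeg fun k _ => neg_injective.ne (hy k).symm
  simpa [eval_prod, Xi, neg_add_eq_sub] using h.symm

theorem sum_Xi_mul_Kk (hNM : N < M) {c : ℂ} (μ : Fin N → ℂ) {lam : Fin M → ℂ}
    (hinj : Function.Injective lam) {y : ℂ} (hy : ∀ k, (y - lam k) ^ 2 + c ^ 2 ≠ 0) :
    ∑ k, Xi μ lam k * Kk c y (lam k) = I * (Vp c μ lam y - Vm c μ lam y) := by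
  have hfactor : ∀ k, (y - lam k) ^ 2 + c ^ 2 = (lam k - (y - I * c)) * (lam k - (y + I * c)) :=
    fun k => by linear_combination c ^ 2 * I_sq
  have hminus : ∀ k, lam k ≠ y - I * c := fun k h => hy k (by rw [hfactor, h]; ring)
  have hplus : ∀ k, lam k ≠ y + I * c := fun k h => hy k (by rw [hfactor, h]; ring)
  have hKk : ∀ k, Kk c y (lam k) =
      I * ((lam k - (y - I * c))⁻¹ - (lam k - (y + I * c))⁻¹) := fun k => by
    have hm := sub_ne_zero.mpr (hminus k)
    have hp := sub_ne_zero.mpr (hplus k)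
    rw [Kk, hfactor, inv_sub_inv hm hp, ← mul_div_assoc]
    congr 1
    linear_combination 2 * c * I_sq
  simp only [hKk, mul_left_comm _ I, mul_sub (Xi _ _ _), ← mul_sum, sum_sub_distrib,
    sum_Xi_mul_inv_sub hNM μ hinj hminus, sum_Xi_mul_inv_sub hNM μ hinj hplus]
  simp only [Vp, Vm, ← sub_add, ← sub_sub]

/-- `diag(Ṽ⁺ - Ṽ⁻) + (i Ξ_j K(λ_j, λ_k))_{jk}`: the matrix `diag(Ṽ⁺ - Ṽ⁻) (1 + Ũ)` without its
rank-one part, the only part that involves `λ_p` and `λ_s`. -/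
noncomputable def Smat (c : ℂ) (μ : Fin N → ℂ) (lam : Fin M → ℂ) : Matrix (Fin M) (Fin M) ℂ :=
  diagonal (fun j => Vp c μ lam (lam j) - Vm c μ lam (lam j)) +
    of fun j k => I * Xi μ lam j * Kk c (lam j) (lam k)

section Kernels

variable {c : ℂ} {lam : Fin M → ℂ}

theorem one_vecMul_Smat (hNM : N < M) (μ : Fin N → ℂ) (hinj : Function.Injective lam)
    (hlam : ∀ j k, (lam j - lam k) ^ 2 + c ^ 2 ≠ 0) : 1 ᵥ* Smat c μ lam = 0 := by
  ext k
  have hsum : ∑ j, I * Xi μ lam j * Kk c (lam j) (lam k) =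
      I * (I * (Vp c μ lam (lam k) - Vm c μ lam (lam k))) := by
    rw [← sum_Xi_mul_Kk hNM μ hinj (hlam k), mul_sum]
    simp only [Kk_comm c (lam k), mul_assoc]
  rw [Smat, vecMul_add, Pi.add_apply, vecMul_diagonal]
  simp only [vecMul, one_dotProduct, Pi.one_apply, Pi.zero_apply, of_apply, hsum]
  linear_combination (Vp c μ lam (lam k) - Vm c μ lam (lam k)) * I_sq

theorem Smat_mulVec_Xi (hNM : N < M) (μ : Fin N → ℂ) (hinj : Function.Injective lam)
    (hlam : ∀ j k, (lam j - lam k) ^ 2 + c ^ 2 ≠ 0) : Smat c μ lam *ᵥ Xi μ lam = 0 := by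
  ext j
  have hsum : ∑ k, I * Xi μ lam j * Kk c (lam j) (lam k) * Xi μ lam k =
      I * Xi μ lam j * (I * (Vp c μ lam (lam j) - Vm c μ lam (lam j))) := by
    rw [← sum_Xi_mul_Kk hNM μ hinj (hlam j), mul_sum]
    exact sum_congr rfl fun k _ => by ring
  rw [Smat, add_mulVec, Pi.add_apply, mulVec_diagonal]
  simp only [mulVec, dotProduct, Pi.zero_apply, of_apply, hsum]
  linear_combination Xi μ lam j * (Vp c μ lam (lam j) - Vm c μ lam (lam j)) * I_sq

theorem prod_mul_det_one_add_Umat {μ : Fin N → ℂ} (lp ls : ℂ)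
    (hV : ∀ j, Vp c μ lam (lam j) ≠ Vm c μ lam (lam j)) :
    (∏ j, (Vp c μ lam (lam j) - Vm c μ lam (lam j))) * (1 + Umat c μ lam lp ls).det =
      (Smat c μ lam + vecMulVec (fun j => -(I * Xi μ lam j * Kk c ls (lam j)))
        fun k => Kk c lp (lam k)).det := by
  rw [← det_diagonal, ← det_mul, mul_add, mul_one, Smat, add_assoc]
  congr 2
  ext j k
  have := sub_ne_zero.mpr (hV j)
  simp only [diagonal_mul, Umat, Matrix.add_apply, of_apply, vecMulVec_apply]
  field_simp
  ring

theorem Xi_mul_prod_mul_det_one_add_Umat (hNM : N < M) {μ : Fin N → ℂ}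
    (hinj : Function.Injective lam) {lp ls : ℂ}
    (hlam : ∀ j k, (lam j - lam k) ^ 2 + c ^ 2 ≠ 0)
    (hlp : ∀ j, (lp - lam j) ^ 2 + c ^ 2 ≠ 0) (hls : ∀ j, (ls - lam j) ^ 2 + c ^ 2 ≠ 0)
    (hV : ∀ j, Vp c μ lam (lam j) ≠ Vm c μ lam (lam j)) (z : Fin M) :
    Xi μ lam z * ((∏ j, (Vp c μ lam (lam j) - Vm c μ lam (lam j))) *
        (1 + Umat c μ lam lp ls).det) =
      I * (Smat c μ lam).adjugate z z *
        ((Vp c μ lam lp - Vm c μ lam lp) * (Vp c μ lam ls - Vm c μ lam ls)) := by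
  have hleft : 1 ⬝ᵥ (fun j => -(I * Xi μ lam j * Kk c ls (lam j))) =
      Vp c μ lam ls - Vm c μ lam ls := by
    simp only [one_dotProduct, sum_neg_distrib, mul_assoc, ← mul_sum,
      sum_Xi_mul_Kk hNM μ hinj hls]
    linear_combination -(Vp c μ lam ls - Vm c μ lam ls) * I_sq
  have hright : (fun k => Kk c lp (lam k)) ⬝ᵥ Xi μ lam =
      I * (Vp c μ lam lp - Vm c μ lam lp) := by
    rw [dotProduct_comm, dotProduct, sum_Xi_mul_Kk hNM μ hinj hlp]
  have hdet := mul_det_add_vecMulVec_of_kernels (one_vecMul_Smat hNM μ hinj hlam)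
    (Smat_mulVec_Xi hNM μ hinj hlam) (fun j => -(I * Xi μ lam j * Kk c ls (lam j)))
    (fun k => Kk c lp (lam k)) z
  rw [hleft, hright, Pi.one_apply, mul_one, ← prod_mul_det_one_add_Umat lp ls hV] at hdet
  rw [hdet]
  ring

theorem Xi_mul_HR (hNM : N < M) (sc : ℂ) (R : ℕ) {μ : Fin N → ℂ}
    (hinj : Function.Injective lam) {lp ls : ℂ}
    (hlam : ∀ j k, (lam j - lam k) ^ 2 + c ^ 2 ≠ 0)
    (hlp : ∀ j, (lp - lam j) ^ 2 + c ^ 2 ≠ 0) (hls : ∀ j, (ls - lam j) ^ 2 + c ^ 2 ≠ 0)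
    (hV : ∀ j, Vp c μ lam (lam j) ≠ Vm c μ lam (lam j))
    (hVlp : Vp c μ lam lp ≠ Vm c μ lam lp) (hVls : Vp c μ lam ls ≠ Vm c μ lam ls) (z : Fin M) :
    Xi μ lam z * HR c sc R μ lam lp ls =
      (I * sc) ^ R / (c ^ (2 * R - 1) * ((R - 1).factorial : ℂ)) * (-1 : ℂ) ^ (N * (R - 1)) *
        (∏ j, ∏ k, (lam j - lam k + I * c)) * (∏ j, ∏ k, (lam j - μ k)⁻¹) *
        (I * (Smat c μ lam).adjugate z z) := by
  have hdet := Xi_mul_prod_mul_det_one_add_Umat hNM hinj hlam hlp hls hV z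
  have hne := mul_ne_zero (sub_ne_zero.mpr hVlp) (sub_ne_zero.mpr hVls)
  rw [HR, mul_div_assoc', div_eq_iff hne, mul_assoc _ (I * _), ← hdet]
  ring

end Kernels

section Snoc

variable (c : ℂ) (μ : Fin N → ℂ) (lam : Fin M → ℂ)

theorem Xi_snoc (x : ℂ) (j : Fin M) :
    Xi (Fin.snoc μ x : Fin (N + 1) → ℂ) lam j = Xi μ lam j * (x - lam j) := by
  simp only [Xi, Fin.prod_univ_castSucc, Fin.snoc_castSucc, Fin.snoc_last, mul_div_right_comm]

theorem Vp_snoc (x y : ℂ) :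
    Vp c (Fin.snoc μ x : Fin (N + 1) → ℂ) lam y = Vp c μ lam y * (x - (y - I * c)) := by
  simp only [Vp, Fin.prod_univ_castSucc (n := N), Fin.snoc_castSucc, Fin.snoc_last,
    mul_div_right_comm, sub_add]

theorem Vm_snoc (x y : ℂ) :
    Vm c (Fin.snoc μ x : Fin (N + 1) → ℂ) lam y = Vm c μ lam y * (x - (y + I * c)) := by
  simp only [Vm, Fin.prod_univ_castSucc (n := N), Fin.snoc_castSucc, Fin.snoc_last,
    mul_div_right_comm, sub_sub]

theorem isBigO_Smat_snoc (j k : Fin M) :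
    (fun x => Smat c (Fin.snoc μ x : Fin (N + 1) → ℂ) lam j k) =O[cobounded ℂ] fun x => x := by
  have hlinear : ∀ a b : ℂ, (fun x => a * (x - b)) =O[cobounded ℂ] fun x => x := fun a b =>
    (isEquivalent_sub_const_cobounded b).isBigO.const_mul_left a
  have hker : (fun x => I * (Xi μ lam j * (x - lam j)) * Kk c (lam j) (lam k)) =O[cobounded ℂ]
      fun x => x :=
    (hlinear (I * Xi μ lam j * Kk c (lam j) (lam k)) (lam j)).congr_left fun x => by ring
  simp only [Smat, Matrix.add_apply, diagonal_apply, of_apply, Xi_snoc, Vp_snoc, Vm_snoc]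
  refine IsBigO.add ?_ hker
  split_ifs
  · exact (hlinear _ _).sub (hlinear _ _)
  · exact isBigO_zero _ _

theorem isBigO_inv_Xi_snoc (j : Fin M) :
    (fun x => (Xi (Fin.snoc μ x : Fin (N + 1) → ℂ) lam j)⁻¹) =O[cobounded ℂ] fun x => x⁻¹ := by
  simp only [Xi_snoc, mul_inv]
  exact (isEquivalent_sub_const_cobounded _).inv.isBigO.const_mul_left _

theorem isBigO_prod_inv_sub_snoc :
    (fun x => ∏ j, ∏ k, (lam j - (Fin.snoc μ x : Fin (N + 1) → ℂ) k)⁻¹) =O[cobounded ℂ]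
      fun x => x⁻¹ ^ M := by
  have hfactor : ∀ j, (fun x => ∏ k, (lam j - (Fin.snoc μ x : Fin (N + 1) → ℂ) k)⁻¹) =O[cobounded ℂ]
      fun x => x⁻¹ := fun j => by
    simp only [Fin.prod_univ_castSucc (n := N), Fin.snoc_castSucc, Fin.snoc_last]
    refine IsBigO.const_mul_left ?_ _
    refine (isEquivalent_sub_const_cobounded (lam j)).inv.isBigO.neg_left.congr_left fun x => ?_
    rw [Pi.inv_apply, ← inv_neg, neg_sub]
  simpa using IsBigO.finsetProd (s := univ) fun j _ => hfactor j

end Snoc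

theorem isBigO_HR_snoc (hNM : N + 1 < M) (c sc : ℂ) (R : ℕ) {μ : Fin N → ℂ} {lam : Fin M → ℂ}
    (hinj : Function.Injective lam) {lp ls : ℂ} (hμ : ∀ k j, μ k ≠ lam j)
    (hlam : ∀ j k, (lam j - lam k) ^ 2 + c ^ 2 ≠ 0)
    (hlp : ∀ j, (lp - lam j) ^ 2 + c ^ 2 ≠ 0) (hls : ∀ j, (ls - lam j) ^ 2 + c ^ 2 ≠ 0) :
    (fun x => HR c sc R (Fin.snoc μ x : Fin (N + 1) → ℂ) lam lp ls)
      =O[cobounded ℂ ⊓ 𝓟 {x |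
        (∀ j, Vp c (Fin.snoc μ x : Fin (N + 1) → ℂ) lam (lam j) ≠ Vm c (Fin.snoc μ x) lam (lam j)) ∧
        Vp c (Fin.snoc μ x : Fin (N + 1) → ℂ) lam lp ≠ Vm c (Fin.snoc μ x) lam lp ∧
        Vp c (Fin.snoc μ x : Fin (N + 1) → ℂ) lam ls ≠ Vm c (Fin.snoc μ x) lam ls}]
      fun x => (x ^ 2)⁻¹ := by
  obtain ⟨m, rfl⟩ : ∃ m, M = m + 1 := ⟨M - 1, by omega⟩
  have hadj := isBigO_adjugate_diag (z := (0 : Fin (m + 1))) fun j _ k =>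
    isBigO_Smat_snoc c μ lam j k
  have hclosed := (isBigO_inv_Xi_snoc μ lam 0).mul
    (((isBigO_prod_inv_sub_snoc μ lam).const_mul_left
      ((I * sc) ^ R / (c ^ (2 * R - 1) * ((R - 1).factorial : ℂ)) * (-1) ^ ((N + 1) * (R - 1)) *
        ∏ j, ∏ k, (lam j - lam k + I * c))).mul (hadj.const_mul_left I))
  refine (hclosed.mono inf_le_left).congr' ?_ ?_
  · filter_upwards [mem_inf_of_left (eventually_ne_cobounded (lam 0)),
      mem_inf_of_right (mem_principal_self _)] with x hx ⟨hV, hVlp, hVls⟩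
    have hXi : Xi (Fin.snoc μ x : Fin (N + 1) → ℂ) lam 0 ≠ 0 := by
      rw [Xi_snoc]
      exact mul_ne_zero (Xi_ne_zero hinj fun k => hμ k 0) (sub_ne_zero.mpr hx)
    rw [inv_mul_eq_iff_eq_mul₀ hXi, Xi_mul_HR hNM sc R hinj hlam hlp hls hV hVlp hVls]
  · filter_upwards [mem_inf_of_left (eventually_ne_cobounded 0)] with x hx
    rw [Fintype.card_fin, Nat.add_sub_cancel]
    rw [inv_pow, pow_succ]
    field_simp

end LL

/-- Decay at infinity (property 2, case `h = 0`) of the determinant formula `H_R`: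
`H_R(μ₁,…,μ_N; λ; λ_p,λ_s) → 0` as `|μ_N| → ∞` through values for which the
expression is defined. -/
theorem HR_tendsto_zero_at_infty {n R : ℕ} (c sc : ℂ) (hc : c ≠ 0) (hsc : sc ^ 2 = c)
    (hR : 1 ≤ R)
    (μ0 : Fin n → ℂ) (lam : Fin ((n + 1) + R) → ℂ) (hinj : Function.Injective lam)
    (lp ls : ℂ)
    (hmulam : ∀ k j, μ0 k ≠ lam j)
    (hpm : ∀ j k, lam j - lam k + I * c ≠ 0 ∧ lam j - lam k - I * c ≠ 0)
    (hp1 : ∀ j, (lp - lam j) ^ 2 + c ^ 2 ≠ 0)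
    (hs1 : ∀ j, (ls - lam j) ^ 2 + c ^ 2 ≠ 0) :
    Filter.Tendsto (fun x : ℂ => HR c sc R (Fin.snoc μ0 x) lam lp ls)
      (Bornology.cobounded ℂ ⊓ Filter.principal
        {x : ℂ |
          (∀ j, x ≠ lam j) ∧
          (∀ j, Vp c (Fin.snoc μ0 x) lam (lam j) ≠ Vm c (Fin.snoc μ0 x) lam (lam j)) ∧
          Vp c (Fin.snoc μ0 x) lam lp ≠ Vm c (Fin.snoc μ0 x) lam lp ∧
          Vp c (Fin.snoc μ0 x) lam ls ≠ Vm c (Fin.snoc μ0 x) lam ls})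
      (nhds 0) := by
  have hlam : ∀ j k, (lam j - lam k) ^ 2 + c ^ 2 ≠ 0 := fun j k h =>
    mul_ne_zero (hpm j k).1 (hpm j k).2 (by linear_combination h - c ^ 2 * I_sq)
  have hdecay := isBigO_HR_snoc (by omega) c sc R hinj hmulam hlam hp1 hs1
  have hinv : Tendsto (fun x : ℂ => (x ^ 2)⁻¹) (cobounded ℂ) (nhds 0) :=
    tendsto_inv₀_cobounded.comp (tendsto_pow_cobounded_cobounded two_ne_zero)
  refine (hdecay.trans_tendsto (hinv.mono_left inf_le_left)).mono_left ?_
  exact inf_le_inf_left _ (principal_mono.mpr fun _ hx => hx.2)
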